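/- Let (X, f_{1,∞}) be an NDS with f_{1,∞} feeble open and converging uniformly to a continuous map f : X → X, and suppose the compositions (f_r^k) converge collectively to the iterates (f^k). Then f_{1,∞} is strongly multi-transitive if and only if f is strongly multi-transitive (i.e., for every m ∈ ℕ, every a = (a_1,…,a_m) ∈ ℕ^m and all nonempty open U_1,…,U_m, V_1,…,V_m ⊆ X there exists l ∈ ℕ with f^{a_j l}(U_j) ∩ V_j ≠ ∅ for every j). -/

import Mathlib

open Set Filter

section NDSDefs

variable {X : Type*}

/-- `nComp f i n` is the composition `f (i+n-1) ∘ ⋯ ∘ f (i+1) ∘ f i`.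
Here `f` is the 0-indexed sequence of maps of the NDS (so `f 0` is the paper's `f₁`),
and `nComp f 0 n` is the paper's `f₁ⁿ`. -/
def nComp (f : ℕ → X → X) (i : ℕ) : ℕ → X → X
  | 0 => id
  | n + 1 => f (i + n) ∘ nComp f i n

/-- The `k`-th iterate NDS `f^{[k]}`: its `n`-th map (0-indexed) is `f_{kn+1}^{k}`
in the paper's notation, i.e. the composition of `k` maps of `f` starting at index `k*n`. -/
def iterNDS (f : ℕ → X → X) (k : ℕ) : ℕ → X → X :=
  fun n => nComp f (k * n) k

/-- The product NDS `f^{[a]} = f^{[a 0]} × ⋯ × f^{[a (r-1)]}` on `Fin r → X`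
for a vector `a : Fin r → ℕ`. -/
def vecIter (f : ℕ → X → X) {r : ℕ} (a : Fin r → ℕ) : ℕ → (Fin r → X) → Fin r → X :=
  fun n x i => iterNDS f (a i) n (x i)

section Topo

variable [TopologicalSpace X]

/-- Topological transitivity of an NDS. -/
def NDSTransitive (f : ℕ → X → X) : Prop :=
  ∀ U V : Set X, IsOpen U → U.Nonempty → IsOpen V → V.Nonempty →
    ∃ n : ℕ, 1 ≤ n ∧ (nComp f 0 n '' U ∩ V).Nonempty

/-- Multi-transitivity of an NDS. -/
def MultiTransitive (f : ℕ → X → X) : Prop :=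
  ∀ m : ℕ, 1 ≤ m → ∀ U V : Fin m → Set X,
    (∀ i, IsOpen (U i)) → (∀ i, (U i).Nonempty) →
    (∀ i, IsOpen (V i)) → (∀ i, (V i).Nonempty) →
    ∃ l : ℕ, 1 ≤ l ∧ ∀ i : Fin m, (nComp f 0 ((i.1 + 1) * l) '' U i ∩ V i).Nonempty

/-- Multi-transitivity of an NDS with respect to a vector `a`. -/
def MultiTransWrt (f : ℕ → X → X) {p : ℕ} (a : Fin p → ℕ) : Prop :=
  ∀ U V : Fin p → Set X,
    (∀ i, IsOpen (U i)) → (∀ i, (U i).Nonempty) →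
    (∀ i, IsOpen (V i)) → (∀ i, (V i).Nonempty) →
    ∃ l : ℕ, 1 ≤ l ∧ ∀ i : Fin p, (nComp f 0 (a i * l) '' U i ∩ V i).Nonempty

/-- Strong multi-transitivity of an NDS: multi-transitivity with respect to every
vector of positive integers. -/
def StronglyMultiTransitive (f : ℕ → X → X) : Prop :=
  ∀ p : ℕ, 1 ≤ p → ∀ a : Fin p → ℕ, (∀ i, 1 ≤ a i) → MultiTransWrt f a

/-- Weak mixing of order `n` of an NDS. -/
def WeaklyMixingOfOrder (f : ℕ → X → X) (n : ℕ) : Prop :=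
  ∀ U V : Fin n → Set X,
    (∀ i, IsOpen (U i)) → (∀ i, (U i).Nonempty) →
    (∀ i, IsOpen (V i)) → (∀ i, (V i).Nonempty) →
    ∃ m : ℕ, 1 ≤ m ∧ ∀ i : Fin n, (nComp f 0 m '' U i ∩ V i).Nonempty

/-- Weak mixing of all orders of an NDS. -/
def WeaklyMixingAllOrders (f : ℕ → X → X) : Prop :=
  ∀ n : ℕ, 2 ≤ n → WeaklyMixingOfOrder f n

/-- Mild mixing of an NDS: the product with any transitive NDS (on a compact
metric space, with continuous maps) is transitive. -/
def MildlyMixing (f : ℕ → X → X) : Prop :=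
  ∀ (Y : Type) [MetricSpace Y] [CompactSpace Y] (g : ℕ → Y → Y),
    (∀ n, Continuous (g n)) → NDSTransitive g →
      NDSTransitive (fun n (p : X × Y) => (f n p.1, g n p.2))

/-- Δ-transitivity of an NDS. -/
def DeltaTransitive (f : ℕ → X → X) : Prop :=
  ∀ m : ℕ, 1 ≤ m → ∃ Y : Set X, Dense Y ∧ IsGδ Y ∧
    ∀ x ∈ Y, Dense {y : Fin m → X | ∃ n : ℕ, 1 ≤ n ∧ y = fun i => nComp f 0 ((i.1 + 1) * n) x}

/-- Δ-mixing of an NDS. -/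
def DeltaMixing (f : ℕ → X → X) : Prop :=
  ∀ m : ℕ, 1 ≤ m → ∀ A : Set ℕ, A.Infinite → 0 ∉ A →
    ∃ Y : Set X, Dense Y ∧ IsGδ Y ∧
      ∀ x ∈ Y, Dense {y : Fin m → X | ∃ n ∈ A, y = fun i => nComp f 0 ((i.1 + 1) * n) x}

/-- The set `N_{f_{1,∞}}(U,V)` of (positive) hitting times. -/
def hitTimes (f : ℕ → X → X) (U V : Set X) : Set ℕ :=
  {n : ℕ | 1 ≤ n ∧ (nComp f 0 n '' U ∩ V).Nonempty}

/-- A set of positive integers is syndetic if it has bounded gaps. -/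
def Syndetic (A : Set ℕ) : Prop :=
  ∃ M : ℕ, ∀ i : ℕ, 1 ≤ i → ∃ j ∈ A, i ≤ j ∧ j ≤ i + M

/-- A set of positive integers is thick if it contains arbitrarily long runs. -/
def ThickSet (A : Set ℕ) : Prop :=
  ∀ p : ℕ, ∃ n : ℕ, 1 ≤ n ∧ ∀ j ≤ p, n + j ∈ A

/-- A set of positive integers is thickly syndetic. -/
def ThicklySyndetic (A : Set ℕ) : Prop :=
  ∀ l : ℕ, Syndetic {m : ℕ | ∀ j ≤ l, m + j ∈ A}

/-- Thick transitivity of an NDS. -/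
def ThicklyTransitive (f : ℕ → X → X) : Prop :=
  ∀ U V : Set X, IsOpen U → U.Nonempty → IsOpen V → V.Nonempty →
    ThickSet (hitTimes f U V)

/-- Thickly syndetic transitivity of an NDS. -/
def ThicklySyndeticallyTransitive (f : ℕ → X → X) : Prop :=
  ∀ U V : Set X, IsOpen U → U.Nonempty → IsOpen V → V.Nonempty →
    ThicklySyndetic (hitTimes f U V)

/-- Total transitivity of an NDS: every iterate `f^{[n]}` is transitive. -/
def TotallyTransitive (f : ℕ → X → X) : Prop :=
  ∀ n : ℕ, 1 ≤ n → NDSTransitive (iterNDS f n)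

/-- An NDS is feeble open if each map sends nonempty open sets to sets with
nonempty interior. -/
def FeebleOpen (f : ℕ → X → X) : Prop :=
  ∀ i : ℕ, ∀ U : Set X, IsOpen U → U.Nonempty → (interior (f i '' U)).Nonempty

/-- Strong multi-transitivity of an autonomous system `(X, g)`. -/
def ADSStronglyMultiTransitive (g : X → X) : Prop :=
  ∀ m : ℕ, 1 ≤ m → ∀ a : Fin m → ℕ, (∀ j, 1 ≤ a j) →
    ∀ U V : Fin m → Set X,
      (∀ j, IsOpen (U j)) → (∀ j, (U j).Nonempty) →
      (∀ j, IsOpen (V j)) → (∀ j, (V j).Nonempty) →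
      ∃ l : ℕ, 1 ≤ l ∧ ∀ j : Fin m, (g^[a j * l] '' U j ∩ V j).Nonempty

/-- Δ-transitivity of an autonomous system `(X, g)`. -/
def ADSDeltaTransitive (g : X → X) : Prop :=
  ∀ m : ℕ, 1 ≤ m → ∃ Y : Set X, Dense Y ∧ IsGδ Y ∧
    ∀ x ∈ Y, Dense {y : Fin m → X | ∃ n : ℕ, 1 ≤ n ∧ y = fun i => g^[(i.1 + 1) * n] x}

/-- Thickly syndetic transitivity of an autonomous system `(X, g)`. -/
def ADSThicklySyndeticallyTransitive (g : X → X) : Prop :=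
  ∀ U V : Set X, IsOpen U → U.Nonempty → IsOpen V → V.Nonempty →
    ThicklySyndetic {n : ℕ | 1 ≤ n ∧ (g^[n] '' U ∩ V).Nonempty}

end Topo

section MetricDefs

variable [MetricSpace X]

/-- The compositions `f_r^k` converge collectively to the iterates `g^k`. -/
def CollectiveConvergence (f : ℕ → X → X) (g : X → X) : Prop :=
  ∀ ε : ℝ, 0 < ε → ∃ r₀ : ℕ, ∀ r ≥ r₀, ∀ k : ℕ, 1 ≤ k → ∀ x : X,
    dist (nComp f r k x) (g^[k] x) < ε

/-- Chain mixing of an NDS. -/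
def NDSChainMixing (f : ℕ → X → X) : Prop :=
  ∀ x y : X, ∀ δ : ℝ, 0 < δ → ∃ N : ℕ, 1 ≤ N ∧ ∀ n ≥ N,
    ∃ c : ℕ → X, c 0 = x ∧ c n = y ∧ ∀ i < n, dist (f i (c i)) (c (i + 1)) < δ

/-- Chain transitivity of an NDS. -/
def NDSChainTransitive (f : ℕ → X → X) : Prop :=
  ∀ x y : X, ∀ δ : ℝ, 0 < δ → ∃ n : ℕ, 1 ≤ n ∧
    ∃ c : ℕ → X, c 0 = x ∧ c n = y ∧ ∀ i < n, dist (f i (c i)) (c (i + 1)) < δ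

/-- The shadowing property of an NDS. -/
def NDSShadowing (f : ℕ → X → X) : Prop :=
  ∀ ε : ℝ, 0 < ε → ∃ δ : ℝ, 0 < δ ∧ ∀ n : ℕ, ∀ c : ℕ → X,
    (∀ i < n, dist (f i (c i)) (c (i + 1)) < δ) →
      ∃ z : X, ∀ i ≤ n, dist (nComp f 0 i z) (c i) < ε

end MetricDefs

end NDSDefs

/-!
Far along the sequence, a block `nComp f s k` is uniformly close to `flim^[k]`, whatever its length
`k`, so both maps hit the same open targets after a slight shrinking. It remains to trade hits
starting at index `0` for hits starting at a large index `a i * L`. If `f` is strongly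
multi-transitive, every `U i` is reached at some common large time `L`, so the preimages of the
`U i` under the first `a i * L` maps are nonempty, and they are open by continuity. An orbit from
such a preimage to the target at a time later than `L` passes through `U i` at index `a i * L`.
Conversely, if `f` is feeble open, the first `a i * L` maps send `U i` onto a set with nonempty
interior, from which `flim` hits the target.
-/

section Composition

variable {X : Type*}

theorem nComp_add (f : ℕ → X → X) (i m n : ℕ) :
    nComp f i (m + n) = nComp f (i + m) n ∘ nComp f i m := by
  induction n with
  | zero => rfl
  | succ n ih => rw [← Nat.add_assoc, nComp, nComp, ih, Nat.add_assoc, Function.comp_assoc]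

theorem nComp_zero_mul_add (f : ℕ → X → X) (a m n : ℕ) :
    nComp f 0 (a * (m + n)) = nComp f (a * m) (a * n) ∘ nComp f 0 (a * m) := by
  rw [Nat.mul_add, nComp_add, Nat.zero_add]

variable [TopologicalSpace X] {f : ℕ → X → X}

theorem continuous_nComp (hf : ∀ n, Continuous (f n)) (i n : ℕ) : Continuous (nComp f i n) := by
  induction n with
  | zero => exact continuous_id
  | succ n ih => exact (hf _).comp ih

theorem FeebleOpen.nonempty_interior_image_nComp (hfo : FeebleOpen f) (i n : ℕ) {U : Set X}
    (hU : IsOpen U) (hne : U.Nonempty) : (interior (nComp f i n '' U)).Nonempty := by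
  induction n with
  | zero => rwa [nComp, image_id, hU.interior_eq]
  | succ n ih =>
    rw [nComp, image_comp]
    exact (hfo (i + n) _ isOpen_interior ih).mono (interior_mono (image_mono interior_subset))

end Composition

namespace StronglyMultiTransitive

variable {X : Type*} [TopologicalSpace X] {f : ℕ → X → X} {p : ℕ} {a : Fin p → ℕ}
  {U V : Fin p → Set X}

theorem exists_gt_hit (h : StronglyMultiTransitive f) (hp : 1 ≤ p) (ha : ∀ i, 1 ≤ a i)
    (hU : ∀ i, IsOpen (U i)) (hUne : ∀ i, (U i).Nonempty)
    (hV : ∀ i, IsOpen (V i)) (hVne : ∀ i, (V i).Nonempty) (N : ℕ) :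
    ∃ l > N, ∀ i, (nComp f 0 (a i * l) '' U i ∩ V i).Nonempty := by
  -- The hitting times of the scaled vector `(N + 1) • a` are multiples of `N + 1` for `a`.
  obtain ⟨l, hl, hit⟩ := h p hp (fun i => a i * (N + 1))
    (fun i => Nat.mul_pos (ha i) N.succ_pos) U V hU hUne hV hVne
  exact ⟨(N + 1) * l, Nat.le_mul_of_pos_right _ hl, fun i => Nat.mul_assoc .. ▸ hit i⟩

theorem exists_tail_hit (h : StronglyMultiTransitive f) (hf : ∀ n, Continuous (f n))
    (hp : 1 ≤ p) (ha : ∀ i, 1 ≤ a i)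
    (hU : ∀ i, IsOpen (U i)) (hUne : ∀ i, (U i).Nonempty)
    (hV : ∀ i, IsOpen (V i)) (hVne : ∀ i, (V i).Nonempty) (N : ℕ) :
    ∃ L ≥ N, ∃ k ≥ 1, ∀ i, (nComp f (a i * L) (a i * k) '' U i ∩ V i).Nonempty := by
  obtain ⟨L, hL, reach⟩ := h.exists_gt_hit hp ha (fun _ => isOpen_univ)
    (fun i => (hUne i).mono (subset_univ _)) hU hUne N
  have preimage_nonempty (i : Fin p) : (nComp f 0 (a i * L) ⁻¹' U i).Nonempty := by
    simpa only [image_inter_nonempty_iff, univ_inter] using reach i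
  obtain ⟨l, hl, hit⟩ := h.exists_gt_hit hp ha
    (fun i => (hU i).preimage (continuous_nComp hf 0 (a i * L))) preimage_nonempty hV hVne L
  obtain ⟨k, rfl⟩ := Nat.exists_eq_add_of_le hl.le
  refine ⟨L, hL.le, k, by omega, fun i => (hit i).mono (inter_subset_inter_left _ ?_)⟩
  rw [nComp_zero_mul_add, image_comp]
  exact image_mono (image_preimage_subset _ _)

end StronglyMultiTransitive

namespace CollectiveConvergence

variable {X : Type*} [MetricSpace X] {f : ℕ → X → X} {g : X → X}

theorem exists_open_preimage_subset (h : CollectiveConvergence f g) {V : Set X}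
    (hV : IsOpen V) (hVne : V.Nonempty) :
    ∃ W : Set X, IsOpen W ∧ W.Nonempty ∧ ∃ r, ∀ s ≥ r, ∀ k ≥ 1,
      nComp f s k ⁻¹' W ⊆ g^[k] ⁻¹' V ∧ g^[k] ⁻¹' W ⊆ nComp f s k ⁻¹' V := by
  obtain ⟨y, hy⟩ := hVne
  obtain ⟨ε, hε, hball⟩ := Metric.isOpen_iff.1 hV y hy
  obtain ⟨r, hr⟩ := h (ε / 2) (half_pos hε)
  have mem_of_near {u v : X} (huv : dist u v < ε / 2) (hv : v ∈ Metric.ball y (ε / 2)) : u ∈ V :=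
    hball (((dist_triangle u v y).trans_lt (add_lt_add huv hv)).trans_eq (add_halves ε))
  refine ⟨Metric.ball y (ε / 2), Metric.isOpen_ball, Metric.nonempty_ball.2 (half_pos hε), r,
    fun s hs k hk => ⟨fun x hx => mem_of_near ?_ hx, fun x hx => mem_of_near ?_ hx⟩⟩
  · exact dist_comm (nComp f s k x) _ ▸ hr s hs k hk x
  · exact hr s hs k hk x

theorem exists_forall_open_preimage_subset {ι : Type*} [Finite ι] (h : CollectiveConvergence f g)
    {V : ι → Set X} (hV : ∀ i, IsOpen (V i)) (hVne : ∀ i, (V i).Nonempty) :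
    ∃ W : ι → Set X, (∀ i, IsOpen (W i)) ∧ (∀ i, (W i).Nonempty) ∧
      ∃ r, ∀ i, ∀ s ≥ r, ∀ k ≥ 1,
        nComp f s k ⁻¹' W i ⊆ g^[k] ⁻¹' V i ∧ g^[k] ⁻¹' W i ⊆ nComp f s k ⁻¹' V i := by
  choose W hW hWne r hr using fun i => h.exists_open_preimage_subset (hV i) (hVne i)
  obtain ⟨R, hR⟩ := Finite.exists_le r
  exact ⟨W, hW, hWne, R, fun i s hs => hr i s ((hR i).trans hs)⟩

theorem adsStronglyMultiTransitive (h : CollectiveConvergence f g)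
    (hf : ∀ n, Continuous (f n)) (hsmt : StronglyMultiTransitive f) :
    ADSStronglyMultiTransitive g := by
  intro m hm a ha U V hU hUne hV hVne
  obtain ⟨W, hW, hWne, r, hr⟩ := h.exists_forall_open_preimage_subset hV hVne
  obtain ⟨L, hL, k, hk, hit⟩ := hsmt.exists_tail_hit hf hm ha hU hUne hW hWne r
  refine ⟨k, hk, fun i => image_inter_nonempty_iff.2 ?_⟩
  have tail_subset := (hr i (a i * L) (hL.trans (Nat.le_mul_of_pos_left _ (ha i)))
    (a i * k) (Nat.mul_pos (ha i) hk)).1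
  exact (image_inter_nonempty_iff.1 (hit i)).mono (inter_subset_inter_right _ tail_subset)

theorem stronglyMultiTransitive (h : CollectiveConvergence f g) (hfo : FeebleOpen f)
    (hsmt : ADSStronglyMultiTransitive g) : StronglyMultiTransitive f := by
  intro m hm a ha U V hU hUne hV hVne
  obtain ⟨W, hW, hWne, r, hr⟩ := h.exists_forall_open_preimage_subset hV hVne
  obtain ⟨l, hl, hit⟩ := hsmt m hm a ha (fun i => interior (nComp f 0 (a i * r) '' U i)) W
    (fun _ => isOpen_interior)
    (fun i => hfo.nonempty_interior_image_nComp 0 (a i * r) (hU i) (hUne i)) hW hWne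
  refine ⟨r + l, by omega, fun i => ?_⟩
  rw [nComp_zero_mul_add, image_comp, image_inter_nonempty_iff]
  have limit_subset := (hr i (a i * r) (Nat.le_mul_of_pos_left _ (ha i))
    (a i * l) (Nat.mul_pos (ha i) hl)).2
  exact (image_inter_nonempty_iff.1 (hit i)).mono (inter_subset_inter interior_subset limit_subset)

end CollectiveConvergence

theorem stronglyMultiTransitive_iff_limit_general {X : Type*} [MetricSpace X]
    (f : ℕ → X → X) (hf : ∀ n, Continuous (f n)) (flim : X → X) (hfo : FeebleOpen f)
    (hcoll : CollectiveConvergence f flim) :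
    StronglyMultiTransitive f ↔ ADSStronglyMultiTransitive flim :=
  ⟨hcoll.adsStronglyMultiTransitive hf, hcoll.stronglyMultiTransitive hfo⟩

/-- under feeble openness, uniform convergence and collective convergence,
an NDS is strongly multi-transitive iff the limit map is. -/
theorem stronglyMultiTransitive_iff_limit {X : Type*} [MetricSpace X] [CompactSpace X]
    (f : ℕ → X → X) (hf : ∀ n, Continuous (f n))
    (flim : X → X) (hflim : Continuous flim)
    (hfo : FeebleOpen f)
    (hunif : TendstoUniformly f flim Filter.atTop)
    (hcoll : CollectiveConvergence f flim) :
    StronglyMultiTransitive f ↔ ADSStronglyMultiTransitive flim :=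
  stronglyMultiTransitive_iff_limit_general f hf flim hfo hcoll
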